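/- Let ψ₁, ψ₂ ∈ [0,1), let s₁, s₂ ≤ 0 be reals, and set Σ := diag(s₁, s₂). Then for every square-integrable ζ : [0,1] → ℝ², ∫₀¹ ζ(ξ)ᵀ Q(ξ) Σ [ζ(ξ) + (𝒦₂ζ)] dξ ≤ 0. Consequently, Assumption 2 holds for every map Σ : ℝ² → M₂(ℝ) whose values are diagonal matrices with nonpositive diagonal entries; in particular it holds for the tire friction source Σ(y) := diag(−σ₁|y₁|_ε/μ₁(y₁), −σ₂|y₂|_ε/μ₂(y₂)) with |v|_ε := √(v² + ε), ε ≥ 0, and μ_i : ℝ → [μ_min, ∞), μ_min > 0. -/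

import Mathlib

open MeasureTheory Matrix Set

noncomputable section

attribute [local instance] Matrix.normedAddCommGroup Matrix.normedSpace

abbrev Vec2 := Fin 2 → ℝ
abbrev Mat2 := Matrix (Fin 2) (Fin 2) ℝ

/-- Nondimensional pressure distribution `p̄(ξ) = (a/(1-e^{-a})) e^{-aξ}`. -/
def pbar (a ξ : ℝ) : ℝ := a / (1 - Real.exp (-a)) * Real.exp (-a * ξ)

/-- The physical parameters of the single-track tire model. -/
structure TireParams where
  vx : ℝ
  L1 : ℝ
  L2 : ℝ
  Fz1 : ℝ
  Fz2 : ℝ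
  σ1 : ℝ
  σ2 : ℝ
  a1 : ℝ
  a2 : ℝ
  φ1 : ℝ
  φ2 : ℝ
  vx_pos : 0 < vx
  L1_pos : 0 < L1
  L2_pos : 0 < L2
  Fz1_pos : 0 < Fz1
  Fz2_pos : 0 < Fz2
  σ1_pos : 0 < σ1
  σ2_pos : 0 < σ2
  a1_pos : 0 < a1
  a2_pos : 0 < a2
  φ1_mem : φ1 ∈ Set.Ioc (0:ℝ) 1
  φ2_mem : φ2 ∈ Set.Ioc (0:ℝ) 1

namespace TireParams

variable (P : TireParams)

def ψ1 : ℝ := 1 - P.φ1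
def ψ2 : ℝ := 1 - P.φ2

def Λmat : Mat2 := Matrix.diagonal ![P.vx / P.L1, P.vx / P.L2]

def Hmat : Mat2 := (2:ℝ) • Matrix.diagonal ![P.φ1, P.φ2]

def K1 (ξ : ℝ) : Mat2 :=
  Matrix.diagonal ![P.Fz1 * P.σ1 * pbar P.a1 ξ, P.Fz2 * P.σ2 * pbar P.a2 ξ]

def K2 (ξ : ℝ) : Mat2 :=
  -Matrix.diagonal ![P.ψ1 * pbar P.a1 ξ, P.ψ2 * pbar P.a2 ξ]

def K3 (ξ : ℝ) : Mat2 :=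
  -P.vx • Matrix.diagonal ![P.ψ1 / P.L1 * deriv (pbar P.a1) ξ, P.ψ2 / P.L2 * deriv (pbar P.a2) ξ]

def K4 : Mat2 :=
  P.vx • Matrix.diagonal ![P.ψ1 / P.L1 * pbar P.a1 1, P.ψ2 / P.L2 * pbar P.a2 1]

def Q (ξ : ℝ) : Mat2 := P.K1 ξ * (P.Hmat)⁻¹

/-- `(𝒦ζ) = ∫₀¹ K(ξ) ζ(ξ) dξ`. -/
def Kop (K : ℝ → Mat2) (ζ : ℝ → Vec2) : Vec2 := ∫ ξ in (0:ℝ)..1, (K ξ).mulVec (ζ ξ)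

def K1op (ζ : ℝ → Vec2) : Vec2 := Kop P.K1 ζ

def K2op (ζ : ℝ → Vec2) : Vec2 := Kop P.K2 ζ

/-- `(𝒦₃ζ) = ∫₀¹ K₃(ξ)ζ(ξ)dξ + K₄ ζ(1)`. -/
def K3op (ζ : ℝ → Vec2) : Vec2 := Kop P.K3 ζ + (P.K4).mulVec (ζ 1)

/-- `(𝒜ζ)(ξ) = -Λ ζ'(ξ) + (𝒦₃ζ)`, expressed through a given derivative `ζ'`. -/
def Aop (ζ ζ' : ℝ → Vec2) (ξ : ℝ) : Vec2 := -(P.Λmat).mulVec (ζ' ξ) + P.K3op ζ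

end TireParams

/-- `ζ` is C¹ on `[0,1]` with derivative `ζ'`. -/
def IsC1On01 (ζ ζ' : ℝ → Vec2) : Prop :=
  (∀ ξ ∈ Icc (0:ℝ) 1, HasDerivWithinAt ζ (ζ' ξ) (Icc (0:ℝ) 1) ξ) ∧
    ContinuousOn ζ' (Icc (0:ℝ) 1)

/-- Square integrability on `(0,1)`. -/
def SqIntegrableOn01 (ζ : ℝ → Vec2) : Prop :=
  Measurable ζ ∧ IntervalIntegrable (fun ξ => ∑ i, (ζ ξ i) ^ 2) volume 0 1

/-- Assumption 1 (strict dissipativity of `𝒜`). -/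
def Assumption1 (P : TireParams) (ω : ℝ) : Prop :=
  ∀ ζ ζ' : ℝ → Vec2, IsC1On01 ζ ζ' → ζ 0 = 0 →
    (∫ ξ in (0:ℝ)..1, P.Aop ζ ζ' ξ ⬝ᵥ (P.Q ξ).mulVec (ζ ξ)) ≤
      -ω * ∫ ξ in (0:ℝ)..1, ∑ i, (ζ ξ i) ^ 2

/-- Assumption 2 (dissipativity of the source `Σ`). -/
def Assumption2 (P : TireParams) (S : Vec2 → Mat2) : Prop :=
  ∀ y : Vec2, ∀ ζ : ℝ → Vec2, SqIntegrableOn01 ζ →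
    (∫ ξ in (0:ℝ)..1, ζ ξ ⬝ᵥ (P.Q ξ).mulVec ((S y).mulVec (ζ ξ + P.K2op ζ))) ≤ 0

/-! All matrices involved are diagonal, so the integral splits into one scalar integral per axle.
Write `p = pbar a` and `m = ∫ p f`. Since `p` is a probability density on `[0, 1]`, Cauchy–Schwarz
gives `m² ≤ ∫ p f²`, hence `∫ p f (f - ψ m) = ∫ p f² - ψ m² ≥ 0` for `ψ ≤ 1`. The source multiplies
this quantity by a nonpositive constant. -/

section WeightedIntegral

variable {α : Type*} [MeasurableSpace α] {μ : Measure α} {p f : α → ℝ}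

theorem sq_integral_mul_le_integral_mul_integral_mul_sq (hp_nonneg : 0 ≤ᵐ[μ] p)
    (hp : Integrable p μ) (hpf : Integrable (fun x => p x * f x) μ)
    (hpf2 : Integrable (fun x => p x * f x ^ 2) μ) :
    (∫ x, p x * f x ∂μ) ^ 2 ≤ (∫ x, p x ∂μ) * ∫ x, p x * f x ^ 2 ∂μ := by
  have quadratic_nonneg (t : ℝ) :
      0 ≤ (∫ x, p x ∂μ) * (t * t) + (-2 * ∫ x, p x * f x ∂μ) * t + ∫ x, p x * f x ^ 2 ∂μ :=
    calc
      0 ≤ ∫ x, p x * (f x - t) ^ 2 ∂μ :=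
        integral_nonneg_of_ae (hp_nonneg.mono fun x hx => mul_nonneg hx (sq_nonneg _))
      _ = ∫ x, (p x * (t * t) - 2 * t * (p x * f x) + p x * f x ^ 2) ∂μ := by
        congr with x; ring
      _ = _ := by
        have lower_terms_integrable :
            Integrable (fun x => p x * (t * t) - 2 * t * (p x * f x)) μ :=
          (hp.mul_const _).sub (hpf.const_mul _)
        rw [integral_add lower_terms_integrable hpf2,
          integral_sub (hp.mul_const _) (hpf.const_mul _), integral_mul_const, integral_const_mul]
        ring
  have discriminant_nonpos := discrim_le_zero quadratic_nonneg
  rw [discrim] at discriminant_nonpos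
  linarith

theorem integral_mul_mul_sub_nonneg (hp_nonneg : 0 ≤ᵐ[μ] p)
    (hp : Integrable p μ) (hpf : Integrable (fun x => p x * f x) μ)
    (hpf2 : Integrable (fun x => p x * f x ^ 2) μ) {k : ℝ} (hk : k * ∫ x, p x ∂μ ≤ 1) :
    0 ≤ ∫ x, p x * (f x * (f x - k * ∫ y, p y * f y ∂μ)) ∂μ := by
  set m := ∫ y, p y * f y ∂μ
  have second_moment_nonneg : 0 ≤ ∫ x, p x * f x ^ 2 ∂μ :=
    integral_nonneg_of_ae (hp_nonneg.mono fun x hx => mul_nonneg hx (sq_nonneg _))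
  have cauchy_schwarz : m ^ 2 ≤ (∫ x, p x ∂μ) * ∫ x, p x * f x ^ 2 ∂μ :=
    sq_integral_mul_le_integral_mul_integral_mul_sq hp_nonneg hp hpf hpf2
  have mean_term_le : k * m ^ 2 ≤ ∫ x, p x * f x ^ 2 ∂μ := by
    rcases le_total k 0 with hk_nonpos | hk_nonneg
    · exact (mul_nonpos_of_nonpos_of_nonneg hk_nonpos (sq_nonneg m)).trans second_moment_nonneg
    · calc
        k * m ^ 2 ≤ (k * ∫ x, p x ∂μ) * ∫ x, p x * f x ^ 2 ∂μ := by
          rw [mul_assoc]; gcongr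
        _ ≤ ∫ x, p x * f x ^ 2 ∂μ := mul_le_of_le_one_left second_moment_nonneg hk
  calc
    0 ≤ (∫ x, p x * f x ^ 2 ∂μ) - k * m ^ 2 := sub_nonneg.2 mean_term_le
    _ = ∫ x, (p x * f x ^ 2 - k * m * (p x * f x)) ∂μ := by
      rw [integral_sub hpf2 (hpf.const_mul _), integral_const_mul]; ring
    _ = ∫ x, p x * (f x * (f x - k * m)) ∂μ := by
      congr with x; ring

end WeightedIntegral

theorem pbar_nonneg {a : ℝ} (ha : 0 ≤ a) (ξ : ℝ) : 0 ≤ pbar a ξ := by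
  have exp_le_one : Real.exp (-a) ≤ 1 := Real.exp_le_one_iff.2 (neg_nonpos.2 ha)
  exact mul_nonneg (div_nonneg ha (sub_nonneg.2 exp_le_one)) (Real.exp_pos _).le

theorem continuous_pbar (a : ℝ) : Continuous (pbar a) := by
  unfold pbar
  fun_prop

theorem integral_pbar {a : ℝ} (ha : a ≠ 0) : ∫ ξ in (0 : ℝ)..1, pbar a ξ = 1 := by
  have one_sub_exp_ne_zero : 1 - Real.exp (-a) ≠ 0 := by
    rwa [sub_ne_zero, ne_comm, Ne, Real.exp_eq_one_iff, neg_eq_zero]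
  have integral_exp_neg_mul :
      ∫ ξ in (0 : ℝ)..1, Real.exp (-a * ξ) = (1 - Real.exp (-a)) / a := by
    rw [intervalIntegral.integral_comp_mul_left Real.exp (neg_ne_zero.2 ha), integral_exp]
    simp only [mul_one, mul_zero, Real.exp_zero, smul_eq_mul]
    field_simp
    ring
  simp only [pbar]
  rw [intervalIntegral.integral_const_mul, integral_exp_neg_mul]
  field_simp

theorem intervalIntegrable_pbar_mul (a : ℝ) {f : ℝ → ℝ} {u v : ℝ}
    (hf : IntervalIntegrable f volume u v) :
    IntervalIntegrable (fun ξ => pbar a ξ * f ξ) volume u v :=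
  hf.continuousOn_mul (continuous_pbar a).continuousOn

theorem SqIntegrableOn01.memLp_apply {ζ : ℝ → Vec2} (hζ : SqIntegrableOn01 ζ) (i : Fin 2) :
    MemLp (fun ξ => ζ ξ i) 2 (volume.restrict (Ioc 0 1)) := by
  have measurable_component : Measurable fun ξ => ζ ξ i := (measurable_pi_apply i).comp hζ.1
  rw [memLp_two_iff_integrable_sq measurable_component.aestronglyMeasurable]
  refine hζ.2.1.mono' (measurable_component.pow_const 2).aestronglyMeasurable
    (.of_forall fun ξ => ?_)
  rw [Real.norm_of_nonneg (sq_nonneg _)]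
  exact Finset.single_le_sum (f := fun j => ζ ξ j ^ 2) (fun j _ => sq_nonneg _)
    (Finset.mem_univ i)

theorem SqIntegrableOn01.intervalIntegrable_apply {ζ : ℝ → Vec2} (hζ : SqIntegrableOn01 ζ)
    (i : Fin 2) : IntervalIntegrable (fun ξ => ζ ξ i) volume 0 1 :=
  (intervalIntegrable_iff_integrableOn_Ioc_of_le zero_le_one).2
    ((hζ.memLp_apply i).integrable one_le_two)

theorem SqIntegrableOn01.intervalIntegrable_apply_sq {ζ : ℝ → Vec2} (hζ : SqIntegrableOn01 ζ)
    (i : Fin 2) : IntervalIntegrable (fun ξ => ζ ξ i ^ 2) volume 0 1 :=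
  (intervalIntegrable_iff_integrableOn_Ioc_of_le zero_le_one).2 (hζ.memLp_apply i).integrable_sq

theorem integral_pbar_mul_mul_sub_nonneg {a k : ℝ} (ha : 0 < a) (hk : k ≤ 1) {f : ℝ → ℝ}
    (hf : IntervalIntegrable f volume 0 1)
    (hf2 : IntervalIntegrable (fun ξ => f ξ ^ 2) volume 0 1) :
    0 ≤ ∫ ξ in (0 : ℝ)..1,
      pbar a ξ * (f ξ * (f ξ - k * ∫ t in (0 : ℝ)..1, pbar a t * f t)) := by
  have mass_eq_one := integral_pbar ha.ne'
  simp only [intervalIntegral.integral_of_le zero_le_one] at mass_eq_one ⊢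
  exact integral_mul_mul_sub_nonneg (.of_forall (pbar_nonneg ha.le))
    ((continuous_pbar a).intervalIntegrable 0 1).1 (intervalIntegrable_pbar_mul a hf).1
    (intervalIntegrable_pbar_mul a hf2).1 (by rwa [mass_eq_one, mul_one])

namespace TireParams

theorem Kop_diagonal_apply {d : ℝ → Vec2} {ζ : ℝ → Vec2}
    (hdζ : ∀ i, IntervalIntegrable (fun ξ => d ξ i * ζ ξ i) volume 0 1) (i : Fin 2) :
    Kop (fun ξ => diagonal (d ξ)) ζ i = ∫ ξ in (0 : ℝ)..1, d ξ i * ζ ξ i := by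
  simp only [Kop, intervalIntegral.integral_of_le zero_le_one]
  rw [eval_integral fun j => (hdζ j).1.congr (.of_forall fun ξ => (mulVec_diagonal _ _ _).symm)]
  simp only [mulVec_diagonal]

variable (P : TireParams)

/-- The decay rates `(a₁, a₂)` of the pressure distributions, indexed by the axle. -/
def decayRate : Vec2 := ![P.a1, P.a2]

/-- The weights `(ψ₁, ψ₂)` of the mean values in `𝒦₂`, indexed by the axle. -/
def meanWeight : Vec2 := ![P.ψ1, P.ψ2]

/-- The constants `F_{zi} σ_i / (2 φ_i)` by which the weight `Q` multiplies the pressure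
distributions, indexed by the axle. -/
def weightGain : Vec2 := ![P.Fz1 * P.σ1 / (2 * P.φ1), P.Fz2 * P.σ2 / (2 * P.φ2)]

theorem decayRate_pos (i : Fin 2) : 0 < P.decayRate i := by
  fin_cases i
  exacts [P.a1_pos, P.a2_pos]

theorem meanWeight_le_one (i : Fin 2) : P.meanWeight i ≤ 1 := by
  fin_cases i
  exacts [sub_le_self 1 P.φ1_mem.1.le, sub_le_self 1 P.φ2_mem.1.le]

theorem weightGain_pos (i : Fin 2) : 0 < P.weightGain i := by
  fin_cases i
  exacts [div_pos (mul_pos P.Fz1_pos P.σ1_pos) (mul_pos two_pos P.φ1_mem.1),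
    div_pos (mul_pos P.Fz2_pos P.σ2_pos) (mul_pos two_pos P.φ2_mem.1)]

theorem inv_Hmat : P.Hmat⁻¹ = diagonal ![(2 * P.φ1)⁻¹, (2 * P.φ2)⁻¹] := by
  have two_mul_φ1_ne_zero : 2 * P.φ1 ≠ 0 := mul_ne_zero two_ne_zero P.φ1_mem.1.ne'
  have two_mul_φ2_ne_zero : 2 * P.φ2 ≠ 0 := mul_ne_zero two_ne_zero P.φ2_mem.1.ne'
  apply inv_eq_right_inv
  rw [Hmat, ← diagonal_smul, diagonal_mul_diagonal, ← diagonal_one]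
  congr 1
  ext i
  fin_cases i
  exacts [mul_inv_cancel₀ two_mul_φ1_ne_zero, mul_inv_cancel₀ two_mul_φ2_ne_zero]

theorem Q_eq_diagonal (ξ : ℝ) :
    P.Q ξ = diagonal fun i => P.weightGain i * pbar (P.decayRate i) ξ := by
  rw [Q, inv_Hmat, K1, diagonal_mul_diagonal]
  congr 1
  ext i
  fin_cases i
  exacts [mul_right_comm _ _ _, mul_right_comm _ _ _]

theorem K2_eq_diagonal (ξ : ℝ) :
    P.K2 ξ = diagonal fun i => -P.meanWeight i * pbar (P.decayRate i) ξ := by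
  rw [K2, diagonal_neg]
  congr 1
  ext i
  fin_cases i <;> simp [meanWeight, decayRate]

theorem K2op_apply {ζ : ℝ → Vec2} (hζ : ∀ i, IntervalIntegrable (fun ξ => ζ ξ i) volume 0 1)
    (i : Fin 2) :
    P.K2op ζ i = -P.meanWeight i * ∫ ξ in (0 : ℝ)..1, pbar (P.decayRate i) ξ * ζ ξ i := by
  rw [K2op, funext P.K2_eq_diagonal, Kop_diagonal_apply fun j => ?_]
  · simp only [mul_assoc, intervalIntegral.integral_const_mul]
  · simpa only [mul_assoc] using (intervalIntegrable_pbar_mul _ (hζ j)).const_mul _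

theorem dotProduct_Q_mulVec_diagonal_mulVec (s z w : Vec2) (ξ : ℝ) :
    z ⬝ᵥ P.Q ξ *ᵥ (diagonal s *ᵥ w) =
      ∑ i, P.weightGain i * s i * (pbar (P.decayRate i) ξ * (z i * w i)) := by
  rw [Q_eq_diagonal, dotProduct]
  refine Finset.sum_congr rfl fun i _ => ?_
  rw [mulVec_diagonal, mulVec_diagonal]
  ring

theorem integral_dotProduct_Q_mulVec_diagonal_nonpos {s : Vec2} (hs : ∀ i, s i ≤ 0)
    {ζ : ℝ → Vec2} (hζ : SqIntegrableOn01 ζ) :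
    ∫ ξ in (0 : ℝ)..1, ζ ξ ⬝ᵥ P.Q ξ *ᵥ (diagonal s *ᵥ (ζ ξ + P.K2op ζ)) ≤ 0 := by
  have integrable_component (i : Fin 2) : IntervalIntegrable
      (fun ξ => pbar (P.decayRate i) ξ * (ζ ξ i * (ζ ξ i + P.K2op ζ i))) volume 0 1 := by
    refine intervalIntegrable_pbar_mul _ ?_
    simpa only [mul_add, ← sq] using (hζ.intervalIntegrable_apply_sq i).add
      ((hζ.intervalIntegrable_apply i).mul_const _)
  have component_nonneg (i : Fin 2) :
      0 ≤ ∫ ξ in (0 : ℝ)..1, pbar (P.decayRate i) ξ * (ζ ξ i * (ζ ξ i + P.K2op ζ i)) := by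
    simpa only [P.K2op_apply hζ.intervalIntegrable_apply, neg_mul, ← sub_eq_add_neg] using
      integral_pbar_mul_mul_sub_nonneg (P.decayRate_pos i) (P.meanWeight_le_one i)
        (hζ.intervalIntegrable_apply i) (hζ.intervalIntegrable_apply_sq i)
  simp only [dotProduct_Q_mulVec_diagonal_mulVec, Pi.add_apply]
  rw [intervalIntegral.integral_finsetSum fun i _ => (integrable_component i).const_mul _]
  refine Finset.sum_nonpos fun i _ => ?_
  rw [intervalIntegral.integral_const_mul]
  exact mul_nonpos_of_nonpos_of_nonneg
    (mul_nonpos_of_nonneg_of_nonpos (P.weightGain_pos i).le (hs i)) (component_nonneg i)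

end TireParams

/-- for a constant diagonal matrix `Σ = diag(s₁,s₂)` with `s₁,s₂ ≤ 0`,
`∫₀¹ ζᵀQΣ[ζ + 𝒦₂ζ] dξ ≤ 0` for every square-integrable `ζ`; consequently Assumption 2
holds for every source map with diagonal nonpositive values. -/
theorem statement6 (P : TireParams) (s1 s2 : ℝ) (hs1 : s1 ≤ 0) (hs2 : s2 ≤ 0) :
    (∀ ζ : ℝ → Vec2, SqIntegrableOn01 ζ →
      (∫ ξ in (0:ℝ)..1,
          ζ ξ ⬝ᵥ (P.Q ξ).mulVec ((Matrix.diagonal ![s1, s2]).mulVec (ζ ξ + P.K2op ζ))) ≤ 0) ∧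
    (∀ S : Vec2 → Mat2,
      (∀ y : Vec2, ∃ d1 d2 : ℝ, d1 ≤ 0 ∧ d2 ≤ 0 ∧ S y = Matrix.diagonal ![d1, d2]) →
      Assumption2 P S) := by
  constructor
  · intro ζ hζ
    exact P.integral_dotProduct_Q_mulVec_diagonal_nonpos (Fin.forall_fin_two.2 ⟨hs1, hs2⟩) hζ
  · intro S hS y ζ hζ
    obtain ⟨d1, d2, hd1, hd2, hSy⟩ := hS y
    rw [hSy]
    exact P.integral_dotProduct_Q_mulVec_diagonal_nonpos (Fin.forall_fin_two.2 ⟨hd1, hd2⟩) hζ
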